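/- Let A, B be positive invertible operators with m·I ≤ A, B ≤ M·I for 0 < m < M and t ∈ (0,1). Then ((1−t)A + tB)² ≤ ((m+M)⁴/(16 m² M²)) · (A #_t B)². -/

import Mathlib

/-- The `t`-weighted geometric mean `A #_t B = A^{1/2} (A^{-1/2} B A^{-1/2})^t A^{1/2}`,
defined via the continuous functional calculus real power. -/
noncomputable def geomMean {H : Type*} [NormedAddCommGroup H] [InnerProductSpace ℂ H]
    [CompleteSpace H] (A B : H →L[ℂ] H) (t : ℝ) : H →L[ℂ] H :=
  A ^ ((1 : ℝ) / 2) * (A ^ (-(1 : ℝ) / 2) * B * A ^ (-(1 : ℝ) / 2)) ^ t * A ^ ((1 : ℝ) / 2)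

open ContinuousLinearMap

open scoped InnerProductSpace

section RCLike

variable {𝕜 H : Type*} [RCLike 𝕜] [NormedAddCommGroup H] [InnerProductSpace 𝕜 H]

/-- If `X, Y ≥ 0` and `X + Y ≤ c`, then the row operator `(X^{1/2}, Y^{1/2})` has norm at most
`√c`. -/
theorem norm_apply_add_apply_sq_le {X Y : H →L[𝕜] H} (hX : X.IsPositive) (hY : Y.IsPositive)
    {c : ℝ} (hc : 0 < c) (hS : ∀ u, RCLike.re ⟪(X + Y) u, u⟫_𝕜 ≤ c * ‖u‖ ^ 2) (v w : H) :
    ‖X v + Y w‖ ^ 2 ≤ c * (RCLike.re ⟪X v, v⟫_𝕜 + RCLike.re ⟪Y w, w⟫_𝕜) := by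
  set u := X v + Y w with hu
  have key : ∀ {Z : H →L[𝕜] H}, Z.IsPositive → ∀ z : H,
      2 * c * RCLike.re ⟪Z z, u⟫_𝕜 ≤ c ^ 2 * RCLike.re ⟪Z z, z⟫_𝕜 + RCLike.re ⟪Z u, u⟫_𝕜 := by
    intro Z hZ z
    have h := hZ.re_inner_nonneg_left ((c : 𝕜) • z - u)
    have h' : RCLike.re ⟪Z u, z⟫_𝕜 = RCLike.re ⟪Z z, u⟫_𝕜 := by
      rw [hZ.inner_left_eq_inner_right, inner_re_symm]
    simp only [map_sub, map_smul, inner_sub_left, inner_sub_right, inner_smul_left,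
      inner_smul_right, RCLike.conj_ofReal, RCLike.re_ofReal_mul, h'] at h
    linarith
  have h₁ := key hX v
  have h₂ := key hY w
  have h₃ := hS u
  have h₄ : RCLike.re ⟪X v, u⟫_𝕜 + RCLike.re ⟪Y w, u⟫_𝕜 = ‖u‖ ^ 2 := by
    rw [← map_add, ← inner_add_left, ← hu, inner_self_eq_norm_sq]
  simp only [add_apply, inner_add_left, map_add] at h₃
  refine le_of_mul_le_mul_left ?_ hc
  linear_combination h₁ + h₂ + h₃ - 2 * c * h₄

/-- The **Bhatia–Kittaneh inequality**: `4 ‖Y X‖ ≤ c ^ 2` for `X, Y ≥ 0` with `X + Y ≤ c`. -/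
theorem four_mul_norm_mul_le_sq [CompleteSpace H] {X Y : H →L[𝕜] H} (hX : X.IsPositive)
    (hY : Y.IsPositive) {c : ℝ} (hc : 0 < c)
    (hS : ∀ u, RCLike.re ⟪(X + Y) u, u⟫_𝕜 ≤ c * ‖u‖ ^ 2) :
    4 * ‖Y * X‖ ≤ c ^ 2 := by
  by_contra! hlt
  set N := ‖Y * X‖ with hN
  have hN0 : 0 < N := by nlinarith [sq_nonneg c]
  set C := 4 * c * ‖Y‖ with hC
  have hadj : ‖X * Y‖ = N := by
    rw [hN, ← norm_star, star_mul, hX.isSelfAdjoint.star_eq, hY.isSelfAdjoint.star_eq]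
  have key : ∀ v : H, (4 * N - c ^ 2) ^ 2 * ‖Y (X v)‖ ^ 2
      ≤ C ^ 2 * (N ^ 2 * ‖v‖ ^ 2 - ‖Y (X v)‖ ^ 2) := by
    intro v
    set w := Y (X v) with hw
    set a := X ((N : 𝕜) • v) with ha
    set b := Y w with hb
    set D := X b - ((N : 𝕜) * N) • v with hD
    set E := RCLike.re ⟪X ((N : 𝕜) • v), (N : 𝕜) • v⟫_𝕜 + RCLike.re ⟪Y w, w⟫_𝕜 with hE
    have hYa : Y a = (N : 𝕜) • w := by simp [ha, hw]
    have hXb : X b = (N : 𝕜) • ((N : 𝕜) • v) + D := by simp [hD, mul_smul]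
    have hDnorm : ‖D‖ ^ 2 ≤ N ^ 2 * (N ^ 2 * ‖v‖ ^ 2 - ‖w‖ ^ 2) := by
      have h₁ : ‖X b‖ ≤ N * ‖w‖ := hadj ▸ (X * Y).le_opNorm w
      have h₂ : RCLike.re ⟪X b, ((N : 𝕜) * N) • v⟫_𝕜 = N ^ 2 * ‖w‖ ^ 2 := by
        rw [inner_smul_right, hX.inner_left_eq_inner_right, hb, hY.inner_left_eq_inner_right,
          ← hw, ← RCLike.ofReal_mul, RCLike.re_ofReal_mul, inner_self_eq_norm_sq, sq N]
      have h₃ := norm_sub_sq (𝕜 := 𝕜) (X b) (((N : 𝕜) * N) • v)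
      rw [← hD, h₂, norm_smul, norm_mul, RCLike.norm_ofReal, abs_of_pos hN0] at h₃
      have h₄ : ‖X b‖ ^ 2 ≤ (N * ‖w‖) ^ 2 := by gcongr
      linear_combination h₃ + h₄
    have hab : RCLike.re ⟪(X + Y) b, a⟫_𝕜 = N * E + RCLike.re ⟪D, a⟫_𝕜 := by
      rw [add_apply, inner_add_left, map_add, hY.inner_left_eq_inner_right b a, hYa, hXb,
        inner_add_left, inner_smul_left, inner_smul_right, map_add, RCLike.conj_ofReal,
        RCLike.re_ofReal_mul, RCLike.re_ofReal_mul, hE, inner_re_symm (𝕜 := 𝕜) _ a]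
      ring
    have hpol : 4 * RCLike.re ⟪(X + Y) b, a⟫_𝕜 ≤ c * ‖a + b‖ ^ 2 := by
      have h₁ := hS (a + b)
      have h₂ := (hX.add hY).re_inner_nonneg_left (a - b)
      have h₃ : RCLike.re ⟪(X + Y) a, b⟫_𝕜 = RCLike.re ⟪(X + Y) b, a⟫_𝕜 := by
        rw [(hX.add hY).inner_left_eq_inner_right, inner_re_symm]
      rw [map_add, inner_add_left, inner_add_right, inner_add_right] at h₁
      rw [map_sub, inner_sub_left, inner_sub_right, inner_sub_right] at h₂
      simp only [map_add, map_sub, h₃] at h₁ h₂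
      linarith
    have hsum : ‖a + b‖ ^ 2 ≤ c * E := norm_apply_add_apply_sq_le hX hY hc hS _ _
    have haE : ‖a‖ ^ 2 ≤ c * E := by
      have h₁ := norm_apply_add_apply_sq_le hX hY hc hS ((N : 𝕜) • v) 0
      have h₂ := mul_nonneg hc.le (hY.re_inner_nonneg_left w)
      simp only [map_zero, add_zero, inner_zero_left] at h₁
      rw [hE]
      linarith
    have hDa : -(‖D‖ * ‖a‖) ≤ RCLike.re ⟪D, a⟫_𝕜 :=
      (abs_le.1 ((RCLike.abs_re_le_norm _).trans (norm_inner_le_norm _ _))).1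
    have hEa : (4 * N - c ^ 2) * E ≤ 4 * (‖D‖ * ‖a‖) := by nlinarith
    have ha' : (4 * N - c ^ 2) * ‖a‖ ≤ 4 * c * ‖D‖ := by
      rcases (norm_nonneg a).eq_or_lt with h0 | h0
      · rw [← h0, mul_zero]; positivity
      · refine le_of_mul_le_mul_right ?_ h0
        nlinarith [mul_le_mul_of_nonneg_left haE (sub_pos.2 hlt).le,
          mul_le_mul_of_nonneg_left hEa hc.le]
    have hYa' : N * ‖w‖ ≤ ‖Y‖ * ‖a‖ := by
      simpa [hYa, norm_smul, abs_of_pos hN0] using Y.le_opNorm a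
    have hle : (4 * N - c ^ 2) * (N * ‖w‖) ≤ C * ‖D‖ :=
      calc (4 * N - c ^ 2) * (N * ‖w‖) ≤ (4 * N - c ^ 2) * (‖Y‖ * ‖a‖) :=
            mul_le_mul_of_nonneg_left hYa' (sub_pos.2 hlt).le
        _ = ‖Y‖ * ((4 * N - c ^ 2) * ‖a‖) := by ring
        _ ≤ ‖Y‖ * (4 * c * ‖D‖) := by gcongr
        _ = C * ‖D‖ := by rw [hC]; ring
    have hsq := pow_le_pow_left₀
      (mul_nonneg (sub_pos.2 hlt).le (mul_nonneg hN0.le (norm_nonneg w))) hle 2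
    refine le_of_mul_le_mul_left ?_ (pow_pos hN0 2)
    linear_combination hsq + C ^ 2 * hDnorm
  have hδ : 0 < (4 * N - c ^ 2) ^ 2 := pow_pos (sub_pos.2 hlt) 2
  have hpos : 0 < (4 * N - c ^ 2) ^ 2 + C ^ 2 := by positivity
  have hbound : N ≤ √(C ^ 2 * N ^ 2 / ((4 * N - c ^ 2) ^ 2 + C ^ 2)) := by
    refine opNorm_le_bound _ (Real.sqrt_nonneg _) fun v ↦ ?_
    refine le_of_sq_le_sq ?_ (by positivity)
    rw [mul_pow, Real.sq_sqrt (by positivity), div_mul_eq_mul_div, le_div_iff₀ hpos]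
    have := key v
    change ‖Y (X v)‖ ^ 2 * _ ≤ _
    linarith
  rw [Real.le_sqrt' hN0, le_div_iff₀ hpos] at hbound
  nlinarith [mul_pos hδ (pow_pos hN0 2)]

end RCLike

section Complex

variable {H : Type*} [NormedAddCommGroup H] [InnerProductSpace ℂ H] [CompleteSpace H]

theorem isStrictlyPositive_of_smul_one_le {A : H →L[ℂ] H} {m : ℝ} (hm : 0 < m)
    (hA : m • (1 : H →L[ℂ] H) ≤ A) : IsStrictlyPositive A :=
  (isStrictlyPositive_one.smul hm).of_le hA

/-- Operator Kantorovich bound: `A + m M A⁻¹ ≤ m + M` if `m ≤ A ≤ M`. -/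
theorem add_smul_rpow_neg_one_le {A : H →L[ℂ] H} {m M : ℝ} (hm : 0 < m)
    (hA1 : m • (1 : H →L[ℂ] H) ≤ A) (hA2 : A ≤ M • (1 : H →L[ℂ] H)) :
    A + (m * M) • A ^ (-1 : ℝ) ≤ (m + M) • (1 : H →L[ℂ] H) := by
  have hA := isStrictlyPositive_of_smul_one_le hm hA1
  have hsa : IsSelfAdjoint A := hA.nonneg.isSelfAdjoint
  rw [← Algebra.algebraMap_eq_smul_one] at hA1 hA2
  have h1 := (algebraMap_le_iff_le_spectrum (R := ℝ) (ha := hsa)).1 hA1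
  have h2 := (le_algebraMap_iff_spectrum_le (R := ℝ) (ha := hsa)).1 hA2
  have hcont : ContinuousOn (fun x : ℝ ↦ x ^ (-1 : ℝ)) (spectrum ℝ A) := fun x hx ↦
    (Real.continuousAt_rpow_const x _ (.inl (hm.trans_le (h1 x hx)).ne')).continuousWithinAt
  have hcfc : A + (m * M) • A ^ (-1 : ℝ) = cfc (fun x : ℝ ↦ x + (m * M) • x ^ (-1 : ℝ)) A := by
    rw [CFC.rpow_eq_cfc_real hA.nonneg, cfc_add .., cfc_smul .., cfc_id' ..]
  rw [hcfc, ← Algebra.algebraMap_eq_smul_one]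
  refine cfc_le_algebraMap _ _ _ fun x hx ↦ ?_
  have hx0 := hm.trans_le (h1 x hx)
  rw [Real.rpow_neg_one, smul_eq_mul, ← div_eq_mul_inv, ← le_sub_iff_add_le', div_le_iff₀ hx0]
  nlinarith [mul_nonneg (sub_nonneg.2 (h1 x hx)) (sub_nonneg.2 (h2 x hx))]

/-- Operator Young inequality `C⁻ᵗ ≤ (1 - t) + t C⁻¹`. -/
theorem rpow_neg_le {C : H →L[ℂ] H} (hC : IsStrictlyPositive C) {t : ℝ} (ht0 : 0 ≤ t)
    (ht1 : t ≤ 1) : C ^ (-t) ≤ (1 - t) • (1 : H →L[ℂ] H) + t • C ^ (-1 : ℝ) := by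
  have hsa : IsSelfAdjoint C := hC.nonneg.isSelfAdjoint
  have hpos : ∀ x ∈ spectrum ℝ C, 0 < x := fun x hx ↦ hC.spectrum_pos hx
  have hcont : ∀ s : ℝ, ContinuousOn (fun x : ℝ ↦ x ^ s) (spectrum ℝ C) := fun s x hx ↦
    (Real.continuousAt_rpow_const x _ (.inl (hpos x hx).ne')).continuousWithinAt
  have hc1 := hcont (-1)
  have hcfc : (1 - t) • (1 : H →L[ℂ] H) + t • C ^ (-1 : ℝ)
      = cfc (fun x : ℝ ↦ (1 - t) + t • x ^ (-1 : ℝ)) C := by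
    rw [CFC.rpow_eq_cfc_real hC.nonneg, cfc_const_add .., cfc_smul ..,
      Algebra.algebraMap_eq_smul_one]
  rw [hcfc, CFC.rpow_eq_cfc_real hC.nonneg]
  refine cfc_mono (fun x hx ↦ ?_) (hcont _) (by fun_prop)
  have hx0 := hpos x hx
  have h := Real.geom_mean_le_arith_mean2_weighted (sub_nonneg.2 ht1) ht0 zero_le_one
    (Real.rpow_nonneg hx0.le (-1)) (sub_add_cancel 1 t)
  rwa [Real.one_rpow, one_mul, mul_one, ← Real.rpow_mul hx0.le, neg_one_mul] at h

/-- The inverse of `A #ₜ B` is dominated by `(1 - t) A⁻¹ + t B⁻¹`. -/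
theorem exists_mul_geomMean_eq_one {A B : H →L[ℂ] H} (hA : IsStrictlyPositive A)
    (hB : IsStrictlyPositive B) {t : ℝ} (ht0 : 0 ≤ t) (ht1 : t ≤ 1) :
    ∃ G : H →L[ℂ] H, 0 ≤ G ∧ G * geomMean A B t = 1 ∧
      G ≤ (1 - t) • A ^ (-1 : ℝ) + t • B ^ (-1 : ℝ) := by
  set P := A ^ ((1 : ℝ) / 2) with hP
  set Q := A ^ (-(1 : ℝ) / 2) with hQ
  set C := Q * B * Q with hCdef
  have hQ0 : 0 ≤ Q := CFC.rpow_nonneg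
  have hPQ : P * Q = 1 := by
    rw [hP, hQ, neg_div]; exact CFC.rpow_mul_rpow_neg _ hA
  have hQP : Q * P = 1 := by
    rw [hP, hQ, neg_div]; exact CFC.rpow_neg_mul_rpow _ hA
  have hQQ : Q * Q = A ^ (-1 : ℝ) := by
    rw [hQ, ← CFC.rpow_add hA.isUnit]; norm_num
  have hQu : IsUnit Q := ⟨⟨Q, P, hQP, hPQ⟩, rfl⟩
  have hC : IsStrictlyPositive C :=
    IsStrictlyPositive.iff_of_unital.2
      ⟨conjugate_nonneg_of_nonneg hB.nonneg hQ0, (hQu.mul hB.isUnit).mul hQu⟩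
  have hCt : C ^ (-t) * C ^ t = 1 := CFC.rpow_neg_mul_rpow _ hC
  have hBB : B ^ (-1 : ℝ) * B = 1 := by
    simpa [CFC.rpow_one B hB.nonneg] using CFC.rpow_neg_mul_rpow 1 hB
  have hCC : C * C ^ (-1 : ℝ) = 1 := by
    simpa [CFC.rpow_one C hC.nonneg] using CFC.rpow_mul_rpow_neg 1 hC
  have hQCQ : Q * C ^ (-1 : ℝ) * Q = B ^ (-1 : ℝ) := by
    have h : B * (Q * C ^ (-1 : ℝ) * Q) = 1 :=
      calc B * (Q * C ^ (-1 : ℝ) * Q) = P * Q * B * Q * C ^ (-1 : ℝ) * Q := by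
            rw [hPQ, one_mul]; simp only [mul_assoc]
        _ = P * (C * C ^ (-1 : ℝ)) * Q := by simp only [hCdef, mul_assoc]
        _ = 1 := by rw [hCC, mul_one, hPQ]
    exact (left_inv_eq_right_inv hBB h).symm
  refine ⟨Q * C ^ (-t) * Q, conjugate_nonneg_of_nonneg CFC.rpow_nonneg hQ0, ?_, ?_⟩
  · calc Q * C ^ (-t) * Q * geomMean A B t = Q * C ^ (-t) * (Q * P) * C ^ t * P := by
          rw [geomMean, ← hP, ← hQ, ← hCdef]; simp only [mul_assoc]
      _ = Q * (C ^ (-t) * C ^ t) * P := by rw [hQP, mul_one]; simp only [mul_assoc]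
      _ = 1 := by rw [hCt, mul_one, hQP]
  · refine (conjugate_le_conjugate_of_nonneg (rpow_neg_le hC ht0 ht1) hQ0).trans_eq ?_
    rw [mul_add, add_mul, mul_smul_comm, smul_mul_assoc, mul_one, mul_smul_comm, smul_mul_assoc,
      hQQ, hQCQ]

/-- If `X` and `G` are self-adjoint and `‖X u‖ ≤ k ‖G u‖` for all `u`, then `X² ≤ k² G²`. -/
theorem sq_le_smul_sq_of_norm_apply_le {X G : H →L[ℂ] H} (hX : IsSelfAdjoint X)
    (hG : IsSelfAdjoint G) {k : ℝ} (h : ∀ u, ‖X u‖ ≤ k * ‖G u‖) :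
    X ^ 2 ≤ k ^ 2 • G ^ 2 := by
  have hsq : ∀ {Z : H →L[ℂ] H}, IsSelfAdjoint Z → ∀ u,
      RCLike.re ⟪(Z ^ 2) u, u⟫_ℂ = ‖Z u‖ ^ 2 := by
    intro Z hZ u
    have h : ⟪(Z ^ 2) u, u⟫_ℂ = ⟪Z u, Z u⟫_ℂ := by
      rw [sq]; exact hZ.isSymmetric (Z u) u
    rw [h, inner_self_eq_norm_sq]
  have hsa : IsSelfAdjoint (k ^ 2 • G ^ 2 - X ^ 2) :=
    ((IsSelfAdjoint.all (k ^ 2)).smul (hG.pow 2)).sub (hX.pow 2)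
  rw [le_def, isPositive_def']
  refine ⟨hsa, fun u ↦ ?_⟩
  have h' := pow_le_pow_left₀ (norm_nonneg _) (h u) 2
  rw [reApplyInnerSelf_apply, sub_apply, inner_sub_left, map_sub, smul_apply,
    inner_smul_left_eq_smul, RCLike.smul_re, hsq hG, hsq hX]
  linarith

end Complex

/-- For positive invertible `A, B` with `m • 1 ≤ A, B ≤ M • 1`, `0 < m < M`, and
`t ∈ (0,1)`, one has `((1-t)A + tB)² ≤ ((m+M)⁴/(16 m² M²)) • (A #ₜ B)²`. -/
theorem weighted_arith_sq_le_geomMean_sq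
    {H : Type*} [NormedAddCommGroup H] [InnerProductSpace ℂ H] [CompleteSpace H]
    (A B : H →L[ℂ] H) (hA : 0 ≤ A) (hB : 0 ≤ B)
    (hAinv : Invertible A) (hBinv : Invertible B)
    (m M : ℝ) (hm : 0 < m) (hmM : m < M)
    (hA1 : m • (1 : H →L[ℂ] H) ≤ A) (hA2 : A ≤ M • (1 : H →L[ℂ] H))
    (hB1 : m • (1 : H →L[ℂ] H) ≤ B) (hB2 : B ≤ M • (1 : H →L[ℂ] H))
    (t : ℝ) (ht0 : 0 < t) (ht1 : t < 1) :
    ((1 - t) • A + t • B) ^ 2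
      ≤ ((m + M) ^ 4 / (16 * m ^ 2 * M ^ 2)) • geomMean A B t ^ 2 := by
  have hA' := isStrictlyPositive_of_smul_one_le hm hA1
  have hB' := isStrictlyPositive_of_smul_one_le hm hB1
  have hM : 0 < M := hm.trans hmM
  have ht1' : 0 ≤ 1 - t := sub_nonneg.2 ht1.le
  obtain ⟨G, hG0, hG, hGle⟩ := exists_mul_geomMean_eq_one hA' hB' ht0.le ht1.le
  set X := (1 - t) • A + t • B with hXdef
  have hX0 : 0 ≤ X := add_nonneg (smul_nonneg ht1' hA) (smul_nonneg ht0.le hB)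
  have hsum : X + (m * M) • G ≤ (m + M) • (1 : H →L[ℂ] H) :=
    calc X + (m * M) • G
        ≤ X + (m * M) • ((1 - t) • A ^ (-1 : ℝ) + t • B ^ (-1 : ℝ)) := by gcongr
      _ = (1 - t) • (A + (m * M) • A ^ (-1 : ℝ)) + t • (B + (m * M) • B ^ (-1 : ℝ)) := by
          rw [hXdef]; module
      _ ≤ (1 - t) • ((m + M) • (1 : H →L[ℂ] H)) + t • ((m + M) • (1 : H →L[ℂ] H)) :=
          add_le_add (smul_le_smul_of_nonneg_left (add_smul_rpow_neg_one_le hm hA1 hA2) ht1')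
            (smul_le_smul_of_nonneg_left (add_smul_rpow_neg_one_le hm hB1 hB2) ht0.le)
      _ = (m + M) • (1 : H →L[ℂ] H) := by module
  have hbk := four_mul_norm_mul_le_sq (X := (m * M) • G) (Y := X)
    ((nonneg_iff_isPositive _).1 (smul_nonneg (by positivity) hG0))
    ((nonneg_iff_isPositive _).1 hX0) (add_pos hm hM) fun u ↦ by
      have h := ((le_def _ _).1 hsum).re_inner_nonneg_left u
      rw [sub_apply, inner_sub_left, map_sub, smul_apply, one_apply_eq_self,
        inner_smul_left_eq_smul, RCLike.smul_re, inner_self_eq_norm_sq, sub_nonneg] at h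
      rwa [add_comm]
  have hXG : ‖X * G‖ ≤ (m + M) ^ 2 / (4 * (m * M)) := by
    rw [mul_smul_comm, norm_smul, Real.norm_of_nonneg (by positivity)] at hbk
    rw [le_div_iff₀ (by positivity)]
    linarith
  have hK : (m + M) ^ 4 / (16 * m ^ 2 * M ^ 2) = ((m + M) ^ 2 / (4 * (m * M))) ^ 2 := by
    field_simp; norm_num
  rw [hK]
  have hmean : 0 ≤ geomMean A B t :=
    conjugate_nonneg_of_nonneg CFC.rpow_nonneg CFC.rpow_nonneg
  refine sq_le_smul_sq_of_norm_apply_le hX0.isSelfAdjoint hmean.isSelfAdjoint fun u ↦ ?_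
  calc ‖X u‖ = ‖(X * G) (geomMean A B t u)‖ := by
        change ‖X u‖ = ‖(X * (G * geomMean A B t)) u‖
        rw [hG, mul_one]
    _ ≤ ‖X * G‖ * ‖geomMean A B t u‖ := (X * G).le_opNorm _
    _ ≤ _ := by gcongr
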